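/- arXiv:1704.03702 — 3 statements merged into one kernel-verified Lean document; each statement's English description precedes it below -/
import Mathlib

section
/- Let 𝕐 ⊆ 𝕏 be a maximal p_j-subscheme. Then for every nonzero homogeneous element f ∈ (I_{𝕐/𝕏})_i with i ≥ α_{𝕐/𝕏}, one has I_{𝕐/𝕏} = ⟨f⟩_R^sat, where ⟨f⟩_R^sat = {g ∈ R | 𝔪^k·g ⊆ ⟨f⟩_R for some k ≥ 0} is the saturation of the principal ideal ⟨f⟩_R. -/
noncomputable section

/-! An algebraic model for a 0-dimensional subscheme `𝕏 ⊆ ℙⁿ_K` whose support avoids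
the hyperplane `Z(X₀)`.  The scheme is recorded through the local rings
`𝒪_{𝕏,p_j}` at the points `p_1, …, p_s` of its support, together with the germ map
sending a homogeneous polynomial `F` of degree `i` to the tuple of germs
`(F_{p_1}, …, F_{p_s})`; this is the degree-`i` component of the injection
`ĩ : R → Q^h(R) ≅ ∏_j 𝒪_{𝕏,p_j}[T_j, T_j⁻¹]`, where every graded component of
`Q^h(R)` is identified with `Γ = ∏_j 𝒪_{𝕏,p_j}` by dropping the powers of the `T_j`.
Since `x₀` has germ `1` at every point, the homogeneous coordinate ring
`R = P/I_𝕏` is faithfully encoded by the chain of subspaces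
`R_i ≅ V_i = germ(P_i) ⊆ Γ` (with `V_i ⊆ V_{i+1}`, and `V_i = Γ` for `i ≫ 0`). -/

/-- The data of one (fat) point of a 0-dimensional scheme: a finite local `K`-algebra. -/
structure PointData (K : Type) [Field K] : Type 1 where
  carrier : Type
  [ring : CommRing carrier]
  [alg : Algebra K carrier]
  [loc : IsLocalRing carrier]
  [findim : FiniteDimensional K carrier]

attribute [instance] PointData.ring PointData.alg PointData.loc PointData.findim

/-- A model of a 0-dimensional subscheme of `ℙⁿ_K`, no point of whose support lies
on `Z(X₀)` (coordinates being chosen so that each point has `X₀`-coordinate 1, the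
germ of `x₀` at every point is `1`). -/
structure ZeroDimScheme (K : Type) [Field K] (n : ℕ) : Type 1 where
  /-- the number of points in the support -/
  s : ℕ
  spos : 0 < s
  /-- the local rings `𝒪_{𝕏,p_j}` -/
  pt : Fin s → PointData K
  /-- the germ map: for `F` homogeneous of degree `i` this is the degree-`i`
  component of `ĩ : R → Q^h(R)`, i.e. `F ↦ (F_{p_1}, …, F_{p_s})` -/
  germ : MvPolynomial (Fin (n + 1)) K →ₐ[K] ∀ j, (pt j).carrier
  /-- the germ of `X₀` at each point is `1` -/
  germ_X0 : germ (MvPolynomial.X 0) = 1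
  /-- in all large degrees, the germ map is surjective onto `∏_j 𝒪_{𝕏,p_j}`
  (this characterizes `I_𝕏` as the full homogeneous vanishing ideal of the scheme) -/
  eventually_surj : ∃ N : ℕ, ∀ i, N ≤ i →
    Submodule.map germ.toLinearMap
      (MvPolynomial.homogeneousSubmodule (Fin (n + 1)) K i) = ⊤

namespace ZeroDimScheme

variable {K : Type} [Field K] {n : ℕ}

/-- `Γ = ∏_j 𝒪_{𝕏,p_j}`, the common model for every graded component of `Q^h(R)`. -/
abbrev Gamma (S : ZeroDimScheme K n) : Type := ∀ j, (S.pt j).carrier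

variable (S : ZeroDimScheme K n)

/-- `V i ⊆ Γ` is the image of the degree-`i` component `R_i` of the homogeneous
coordinate ring `R` under (the degree-`i` component of) `ĩ`; we identify `R_i ≅ V i`. -/
def V (i : ℕ) : Submodule K S.Gamma :=
  Submodule.map S.germ.toLinearMap
    (MvPolynomial.homogeneousSubmodule (Fin (n + 1)) K i)

/-- `R_i` for `i : ℤ` (zero in negative degrees). -/
def Vz (i : ℤ) : Submodule K S.Gamma := if 0 ≤ i then S.V i.toNat else ⊥

/-- `deg 𝕏 = Σ_j dim_K 𝒪_{𝕏,p_j}`. -/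
def degX : ℕ := Module.finrank K S.Gamma

/-- The Hilbert function `HF_𝕏(i) = dim_K R_i`. -/
def HF (i : ℕ) : ℕ := Module.finrank K (S.V i)

/-- The Hilbert function on `ℤ`. -/
def HFz (i : ℤ) : ℕ := Module.finrank K (S.Vz i)

/-- The regularity index `r_𝕏`: the least `r` with `HF_𝕏(i) = deg 𝕏` for all `i ≥ r`. -/
def rX : ℕ := sInf {r : ℕ | ∀ i, r ≤ i → S.HF i = S.degX}

/-- `κ_j = dim_K κ(p_j)`, the residue field of `𝕏` at `p_j`. -/
def kappa (j : Fin S.s) : ℕ :=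
  Module.finrank K
    ((S.pt j).carrier ⧸
      Submodule.restrictScalars K (IsLocalRing.maximalIdeal (S.pt j).carrier))

/-- `sj` is a socle element of `𝒪_{𝕏,p_j}`, i.e. `sj ∈ Ann(𝔪_{𝕏,p_j})`.  By
Proposition 1.2, the maximal `p_j`-subschemes `𝕐 ⊆ 𝕏` correspond 1-1 to the ideals
of `Γ` generated by `(0,…,0,sj,0,…,0)` with `sj` a *nonzero* socle element. -/
def IsSocle (j : Fin S.s) (sj : (S.pt j).carrier) : Prop :=
  ∀ b ∈ IsLocalRing.maximalIdeal (S.pt j).carrier, sj * b = 0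

/-- The ideal `U = ⟨(0,…,0,sj,0,…,0)⟩` of `Γ` corresponding to the maximal
`p_j`-subscheme `𝕐` determined by the socle element `sj`; one has `I_{𝕐/𝕏} = ĩ⁻¹(U)`. -/
def sepIdeal (j : Fin S.s) (sj : (S.pt j).carrier) : Submodule K S.Gamma :=
  Submodule.restrictScalars K (Ideal.span {(Pi.single j sj : S.Gamma)})

/-- The degree-`i` component `(I_{𝕐/𝕏})_i = R_i ∩ ĩ⁻¹(U)` of the ideal of the maximal
`p_j`-subscheme `𝕐` (given by the socle element `sj`) in `R`. -/
def IY (j : Fin S.s) (sj : (S.pt j).carrier) (i : ℕ) : Submodule K S.Gamma :=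
  S.V i ⊓ S.sepIdeal j sj

/-- `(I_{𝕐/𝕏})_i` for `i : ℤ`. -/
def IYz (j : Fin S.s) (sj : (S.pt j).carrier) (i : ℤ) : Submodule K S.Gamma :=
  S.Vz i ⊓ S.sepIdeal j sj

/-- The Hilbert function `HF_𝕐(i) = HF_𝕏(i) - dim_K (I_{𝕐/𝕏})_i` of the maximal
`p_j`-subscheme `𝕐` given by the socle element `sj`. -/
def HFY (j : Fin S.s) (sj : (S.pt j).carrier) (i : ℕ) : ℕ :=
  S.HF i - Module.finrank K (S.IY j sj i)

/-- `HF_𝕐` on `ℤ`. -/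
def HFYz (j : Fin S.s) (sj : (S.pt j).carrier) (i : ℤ) : ℕ :=
  S.HFz i - Module.finrank K (S.IYz j sj i)

/-- `α_{𝕐/𝕏} = min {i | (I_{𝕐/𝕏})_i ≠ 0}`. -/
def alphaY (j : Fin S.s) (sj : (S.pt j).carrier) : ℕ :=
  sInf {i : ℕ | S.IY j sj i ≠ ⊥}

/-- `μ(a) = min {i | (0,…,0,a T_j^i,0,…,0) ∈ ĩ(R)}` for `a ∈ 𝒪_{𝕏,p_j}`. -/
def mu (j : Fin S.s) (a : (S.pt j).carrier) : ℕ :=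
  sInf {i : ℕ | (Pi.single j a : S.Gamma) ∈ S.V i}

/-- `μ_{𝕐/𝕏}`, the maximal degree of a minimal separator of the maximal
`p_j`-subscheme `𝕐` given by the socle element `sj`; independently of all choices it
equals `max {μ(a·sj) | a ∈ 𝒪_{𝕏,p_j}, a·sj ≠ 0}`. -/
def muY (j : Fin S.s) (sj : (S.pt j).carrier) : ℕ :=
  sSup {m : ℕ | ∃ a : (S.pt j).carrier, a * sj ≠ 0 ∧ m = S.mu j (a * sj)}

/-- `deg_𝕏(p_j) = min {μ_{𝕐/𝕏} | 𝕐 a maximal p_j-subscheme of 𝕏}`. -/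
def degP (j : Fin S.s) : ℕ :=
  sInf {m : ℕ | ∃ sj : (S.pt j).carrier, S.IsSocle j sj ∧ sj ≠ 0 ∧ m = S.muY j sj}

/-- `𝕏` has the Cayley–Bacharach property of degree `d`: `deg_𝕏(p_j) ≥ d + 1` for all `j`. -/
def CBP (d : ℕ) : Prop := ∀ j : Fin S.s, d + 1 ≤ S.degP j

/-- `𝕏` is a Cayley–Bacharach scheme: it has `CBP(r_𝕏 - 1)`. -/
def CayleyBacharach : Prop := S.CBP (S.rX - 1)

/-- The residue class map `𝒪_{𝕏,p_j} → κ(p_j)` as a `K`-linear map. -/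
def resQ (j : Fin S.s) :
    (S.pt j).carrier →ₗ[K]
      ((S.pt j).carrier ⧸
        Submodule.restrictScalars K (IsLocalRing.maximalIdeal (S.pt j).carrier)) :=
  (Submodule.restrictScalars K (IsLocalRing.maximalIdeal (S.pt j).carrier)).mkQ

/-- The residue classes of `e 0, …, e (κ_j - 1)` form a `K`-basis of `κ(p_j)`. -/
def IsResidueBasis (j : Fin S.s) {m : ℕ} (e : Fin m → (S.pt j).carrier) : Prop :=
  LinearIndependent K (fun k => S.resQ j (e k)) ∧
    Submodule.span K (Set.range fun k => S.resQ j (e k)) = ⊤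

/-- A family `τ_j : 𝒪_{𝕏,p_j} → K` of trace maps: each `τ_j` is a generator of
`Hom_K(𝒪_{𝕏,p_j}, K)` as an `𝒪_{𝕏,p_j}`-module.  Such a family exists iff `𝕏` is
locally Gorenstein, and it induces a homogeneous trace map `σ` of degree zero of
`Q^h(R)/L₀` (componentwise). -/
def IsTraceFamily (τ : ∀ j, (S.pt j).carrier →ₗ[K] K) : Prop :=
  ∀ j, Function.Bijective
    (fun a : (S.pt j).carrier => (τ j).comp (LinearMap.mulRight K a))

/-- The total trace `Γ → K`, `y ↦ Σ_j τ_j (y_j)`; on the degree-`i` component of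
`Q^h(R)` the trace map `σ` is `q ↦ (Ttot τ q)·x₀^i`. -/
def Ttot (τ : ∀ j, (S.pt j).carrier →ₗ[K] K) : S.Gamma →ₗ[K] K :=
  ∑ j : Fin S.s, (τ j).comp (LinearMap.proj j)

/-- The degree-`k` component `(𝔠^σ_𝕏)_k ⊆ Q^h(R)_k ≅ Γ` of the Dedekind complementary
module: `g ∈ (𝔠^σ_𝕏)_k` iff `σ(g · R) ⊆ K[x₀]`, i.e. `Ttot τ (g·x) = 0` whenever
`x ∈ R_i` with `k + i < 0`. -/
def Cmod (τ : ∀ j, (S.pt j).carrier →ₗ[K] K) (k : ℤ) : Submodule K S.Gamma :=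
  ⨅ (i : ℕ) (_ : k + (i : ℤ) < 0) (x : S.Gamma) (_ : x ∈ S.V i),
    LinearMap.ker ((S.Ttot τ).comp (LinearMap.mulRight K x))

/-- The degree-`i` component `(δ^σ_𝕏)_i ⊆ Q^h(R)_i ≅ Γ` of the Dedekind different
`δ^σ_𝕏 = {f ∈ Q^h(R) | f · 𝔠^σ_𝕏 ⊆ R}`. -/
def delta (τ : ∀ j, (S.pt j).carrier →ₗ[K] K) (i : ℤ) : Submodule K S.Gamma :=
  ⨅ (k : ℤ) (g : S.Gamma) (_ : g ∈ S.Cmod τ k),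
    Submodule.comap (LinearMap.mulRight K g) (S.Vz (i + k))

/-- The Hilbert function of the Dedekind different. -/
def HFdelta (τ : ∀ j, (S.pt j).carrier →ₗ[K] K) (i : ℤ) : ℕ :=
  Module.finrank K (S.delta τ i)

/-- `𝕏` has minimal Dedekind different: `δ^σ_𝕏 = ⊕_{i ≥ 2 r_𝕏} R_i`
(recall `R_i ≅ Γ` for `i ≥ r_𝕏`). -/
def MinimalDedekind (τ : ∀ j, (S.pt j).carrier →ₗ[K] K) : Prop :=
  ∀ i : ℤ, S.delta τ i = if 2 * (S.rX : ℤ) ≤ i then ⊤ else ⊥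

/-- The degree-`i` component (`i ≥ 0`) of the conductor
`𝔉_{R̃/R} = {f ∈ R̃ | f·R̃ ⊆ R}` of `R` in `R̃ = ∏_j 𝒪_{𝕏,p_j}[T_j]`
(whose degree-`i` component is all of `Γ` for every `i ≥ 0`). -/
def cond (i : ℕ) : Submodule K S.Gamma :=
  ⨅ y : S.Gamma, Submodule.comap (LinearMap.mulRight K y) (S.V i)

/-- The conductor on `ℤ` (zero in negative degrees, where `R̃` vanishes). -/
def condZ (i : ℤ) : Submodule K S.Gamma := if 0 ≤ i then S.cond i.toNat else ⊥

/-- The degree-`i` component of the trace `tr(𝔠^σ_𝕏) = δ^σ_𝕏 · 𝔠^σ_𝕏` of the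
Dedekind complementary module. -/
def trC (τ : ∀ j, (S.pt j).carrier →ₗ[K] K) (i : ℤ) : Submodule K S.Gamma :=
  ⨆ (a : ℤ) (b : ℤ) (_ : a + b = i), S.delta τ a * S.Cmod τ b

/-- `𝕏` is nearly Gorenstein: `𝔪 ⊆ tr(𝔠^σ_𝕏)`. -/
def NearlyGorenstein (τ : ∀ j, (S.pt j).carrier →ₗ[K] K) : Prop :=
  ∀ i : ℤ, 1 ≤ i → S.Vz i ≤ S.trC τ i

/-- `𝕏` is almost Gorenstein: there is an exact sequence of graded `R`-modules
`0 → R → 𝔠^σ_𝕏(-r_𝕏) → C → 0` with `𝔪·C = 0`.  A degree-zero graded injection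
`R → 𝔠^σ_𝕏(-r_𝕏)` is multiplication by an element `g ∈ (𝔠^σ_𝕏)_{-r_𝕏}` with
`Ann_R(g) = 0`, and `𝔪·C = 0` means `𝔪 · 𝔠^σ_𝕏(-r_𝕏) ⊆ g·R`. -/
def AlmostGorenstein (τ : ∀ j, (S.pt j).carrier →ₗ[K] K) : Prop :=
  ∃ g ∈ S.Cmod τ (-(S.rX : ℤ)),
    (∀ i : ℕ, ∀ x ∈ S.V i, x * g = 0 → x = 0) ∧
    (∀ a : ℕ, 1 ≤ a → ∀ x ∈ S.V a, ∀ k : ℤ, ∀ h ∈ S.Cmod τ k,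
      x * h ∈ Submodule.map (LinearMap.mulRight K g) (S.Vz ((a : ℤ) + k + (S.rX : ℤ))))

/-- `𝕏` is arithmetically Gorenstein, i.e. `R` is a Gorenstein ring; equivalently the
canonical module is free of rank one: `𝔠^σ_𝕏 = g·R` for some `g ∈ (𝔠^σ_𝕏)_{-r_𝕏}`. -/
def ArithGorenstein (τ : ∀ j, (S.pt j).carrier →ₗ[K] K) : Prop :=
  ∃ g ∈ S.Cmod τ (-(S.rX : ℤ)),
    ∀ k : ℤ, S.Cmod τ k = Submodule.map (LinearMap.mulRight K g) (S.Vz (k + (S.rX : ℤ)))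

/-- `𝕏` is level: the socle of `R̄ = R/⟨x₀⟩` equals `R̄_{r_𝕏}`, i.e. no nonzero
homogeneous element of `R̄` of degree `< r_𝕏` is annihilated by `𝔪̄` (recall
`R̄_i ≅ V i / V (i-1)` and `x₀`-multiplication preserves germs). -/
def Level : Prop :=
  ∀ i : ℕ, i < S.rX → ∀ x ∈ S.V i,
    (∀ a : ℕ, 1 ≤ a → ∀ y ∈ S.V a, x * y ∈ S.Vz ((i : ℤ) + (a : ℤ) - 1)) →
      x ∈ S.Vz ((i : ℤ) - 1)

/-- The subspace `{x ∈ Γ | x_k = 0 for k ≠ j}` of `Γ`: the degreewise model for the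
ideal of the subscheme `𝕐_j ⊆ 𝕏` with `I_{𝕐_j} = ∩_{k ≠ j} I_k`. -/
def Wj (j : Fin S.s) : Submodule K S.Gamma :=
  ⨅ (k : Fin S.s) (_ : k ≠ j),
    LinearMap.ker (LinearMap.proj k : S.Gamma →ₗ[K] (S.pt k).carrier)

/-- `(I_{𝕐_j/𝕏})_i` for the subscheme `𝕐_j` complementary to `p_j`. -/
def IW (j : Fin S.s) (i : ℕ) : Submodule K S.Gamma := S.V i ⊓ S.Wj j

/-- The Hilbert function of the subscheme `𝕐_j` complementary to `p_j`. -/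
def HFW (j : Fin S.s) (i : ℕ) : ℕ := S.HF i - Module.finrank K (S.IW j i)

/-- `α_{𝕐_j/𝕏}` for the subscheme `𝕐_j` complementary to `p_j`. -/
def alphaW (j : Fin S.s) : ℕ := sInf {i : ℕ | S.IW j i ≠ ⊥}

/-- The subspace `{x ∈ Γ | x_k = 0 for k ∉ {j₁, j₂}}` of `Γ`: the degreewise model for
the ideal in `R` of the subscheme of the reduced scheme `𝕏` complementary to `{p_{j₁}, p_{j₂}}`. -/
def Wpair (j1 j2 : Fin S.s) : Submodule K S.Gamma :=
  ⨅ (k : Fin S.s) (_ : k ≠ j1) (_ : k ≠ j2),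
    LinearMap.ker (LinearMap.proj k : S.Gamma →ₗ[K] (S.pt k).carrier)

/-- The homogeneous vanishing ideal `I_𝕏 ⊆ P`. -/
def IX : Ideal (MvPolynomial (Fin (n + 1)) K) :=
  Ideal.span {F | (∃ i : ℕ, F ∈ MvPolynomial.homogeneousSubmodule (Fin (n + 1)) K i) ∧
    S.germ F = 0}

/-- The `n×n`-minor (Jacobian determinant with respect to `X_1, …, X_n`) of an
`n`-tuple of polynomials. -/
def jacMinor (Fs : Fin n → MvPolynomial (Fin (n + 1)) K) : MvPolynomial (Fin (n + 1)) K :=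
  Matrix.det (Matrix.of fun a b : Fin n => MvPolynomial.pderiv (Fin.succ b) (Fs a))

/-- The preimage in `P` of the Kähler different `ϑ_𝕏 ⊆ R`: the ideal generated by
`I_𝕏` together with all `n×n` minors of the Jacobian matrix of elements of `I_𝕏`. -/
def KaehlerIdeal : Ideal (MvPolynomial (Fin (n + 1)) K) :=
  S.IX ⊔ Ideal.span {m | ∃ Fs : Fin n → MvPolynomial (Fin (n + 1)) K,
    (∀ a, Fs a ∈ S.IX) ∧ m = jacMinor Fs}

/-- The degree-`i` component of the Kähler different `ϑ_𝕏 ⊆ R`, viewed inside `Γ`. -/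
def thetaPiece (i : ℕ) : Submodule K S.Gamma :=
  Submodule.map S.germ.toLinearMap
    (Submodule.restrictScalars K S.KaehlerIdeal ⊓
      MvPolynomial.homogeneousSubmodule (Fin (n + 1)) K i)

end ZeroDimScheme

end

/-! Since `s_j` is a nonzero socle element, `U = ⟨(0,…,0,s_j,0,…,0)⟩` is a minimal ideal of `Γ`, so
every nonzero `f ∈ U` generates it. On the other hand, multiplication by `x₀` is the identity on
germs and `R_d` fills out `Γ` for large `d`, so for every `f` the saturation of `⟨f⟩_R` consists of
the elements of `R` whose germs lie in the ideal `f·Γ`. -/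

theorem isAtom_span_singleton_iff {R : Type*} [CommSemiring R] {s : R} :
    IsAtom (Ideal.span {s}) ↔ s ≠ 0 ∧ ∀ c, c * s ≠ 0 → c * s ∣ s := by
  constructor
  · intro hs
    refine ⟨fun h => hs.1 (Ideal.span_singleton_eq_bot.mpr h), fun c hc => ?_⟩
    have hle : Ideal.span {c * s} ≤ Ideal.span {s} :=
      Ideal.span_singleton_le_span_singleton.mpr (dvd_mul_left s c)
    have heq := (hs.le_iff_eq (Ideal.span_singleton_eq_bot.not.mpr hc)).mp hle
    exact Ideal.span_singleton_le_span_singleton.mp heq.ge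
  · rintro ⟨hs0, hs⟩
    rw [isAtom_iff_le_of_ge]
    refine ⟨Ideal.span_singleton_eq_bot.not.mpr hs0, fun I hI hle => ?_⟩
    obtain ⟨b, hbI, hb0⟩ := Submodule.exists_mem_ne_zero_of_ne_bot hI
    obtain ⟨c, rfl⟩ := Ideal.mem_span_singleton'.mp (hle hbI)
    exact (Ideal.span_singleton_le_iff_mem I).mpr (I.mem_of_dvd (hs c hb0) hbI)

theorem isAtom_span_singleton_of_forall_mul_maximalIdeal_eq_zero {R : Type*} [CommSemiring R]
    [IsLocalRing R] {s : R} (hs0 : s ≠ 0) (hs : ∀ b ∈ IsLocalRing.maximalIdeal R, s * b = 0) :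
    IsAtom (Ideal.span {s}) := by
  refine isAtom_span_singleton_iff.mpr ⟨hs0, fun c hc => ?_⟩
  have hunit : IsUnit c := by
    by_contra hc_nonunit
    exact hc (mul_comm c s ▸ hs c ((IsLocalRing.mem_maximalIdeal c).mpr hc_nonunit))
  exact hunit.mul_left_dvd.mpr dvd_rfl

theorem isAtom_span_piSingle {ι : Type*} [DecidableEq ι] {R : ι → Type*}
    [∀ k, CommSemiring (R k)] {j : ι} {s : R j} (hs : IsAtom (Ideal.span {s})) :
    IsAtom (Ideal.span {(Pi.single j s : ∀ k, R k)}) := by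
  obtain ⟨hs0, hdvd⟩ := isAtom_span_singleton_iff.mp hs
  refine isAtom_span_singleton_iff.mpr ⟨Pi.single_eq_zero_iff.not.mpr hs0, fun c hc => ?_⟩
  rw [← Pi.single_mul_right] at hc ⊢
  exact map_dvd (MulHom.single j) (hdvd (c j) (Pi.single_eq_zero_iff.not.mp hc))

namespace ZeroDimScheme

variable {K : Type} [Field K] {n : ℕ} (S : ZeroDimScheme K n)

theorem one_mem_V (a : ℕ) : (1 : S.Gamma) ∈ S.V a :=
  ⟨MvPolynomial.X 0 ^ a, MvPolynomial.isHomogeneous_X_pow 0 a, by simp [S.germ_X0]⟩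

theorem exists_forall_Vz_eq_top : ∃ N : ℕ, ∀ d : ℤ, (N : ℤ) ≤ d → S.Vz d = ⊤ := by
  obtain ⟨N, hN⟩ := S.eventually_surj
  refine ⟨N, fun d hd => ?_⟩
  rw [Vz, if_pos (by lia)]
  exact hN d.toNat (by lia)

/-- The left-hand side says that an element of degree `m` with germs `x` lies in the saturation of
the principal ideal of `R` generated by an element of degree `i` with germs `f`. -/
theorem exists_forall_mul_mem_map_mulRight_iff_mem_span (f x : S.Gamma) (i m : ℕ) :
    (∃ k : ℕ, ∀ a : ℕ, k ≤ a → ∀ y ∈ S.V a,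
      y * x ∈ Submodule.map (LinearMap.mulRight K f) (S.Vz ((a : ℤ) + (m : ℤ) - (i : ℤ)))) ↔
      x ∈ Ideal.span {f} := by
  rw [Ideal.mem_span_singleton']
  constructor
  · rintro ⟨k, hk⟩
    obtain ⟨v, -, hv⟩ := hk k le_rfl 1 (S.one_mem_V k)
    exact ⟨v, by simpa using hv⟩
  · rintro ⟨c, rfl⟩
    obtain ⟨N, hN⟩ := S.exists_forall_Vz_eq_top
    refine ⟨N + i, fun a ha y _ => ⟨y * c, ?_, mul_assoc y c f⟩⟩
    rw [hN _ (by lia)]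
    exact Submodule.mem_top

theorem isAtom_span_single_of_isSocle {j : Fin S.s} {sj : (S.pt j).carrier}
    (hsoc : S.IsSocle j sj) (hsj : sj ≠ 0) :
    IsAtom (Ideal.span {(Pi.single j sj : S.Gamma)}) :=
  isAtom_span_piSingle (isAtom_span_singleton_of_forall_mul_maximalIdeal_eq_zero hsj hsoc)

theorem span_singleton_eq_of_mem_sepIdeal {j : Fin S.s} {sj : (S.pt j).carrier}
    (hsoc : S.IsSocle j sj) (hsj : sj ≠ 0) {f : S.Gamma} (hf : f ∈ S.sepIdeal j sj)
    (hf0 : f ≠ 0) : Ideal.span {f} = Ideal.span {(Pi.single j sj : S.Gamma)} :=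
  ((S.isAtom_span_single_of_isSocle hsoc hsj).le_iff_eq
    (Ideal.span_singleton_eq_bot.not.mpr hf0)).mp ((Ideal.span_singleton_le_iff_mem _).mpr hf)

end ZeroDimScheme

/-- Proposition 1.5(a).  Let `𝕐 ⊆ 𝕏` be a maximal `p_j`-subscheme
(given by a nonzero socle element `sj`).  Then for every nonzero homogeneous
`f ∈ (I_{𝕐/𝕏})_i` with `i ≥ α_{𝕐/𝕏}`, one has `I_{𝕐/𝕏} = ⟨f⟩_R^sat`, where
`⟨f⟩_R^sat = {g ∈ R | 𝔪^k·g ⊆ ⟨f⟩_R for some k ≥ 0}`; degreewise (for `g` of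
degree `m`, i.e. `x = ĩ(g) ∈ V m`) the saturation condition reads
`∃ k, ∀ a ≥ k, R_a · g ⊆ f·R_{a+m-i}`, since `(𝔪^k)_a = R_a` for `a ≥ k`. -/
theorem dedekind_CB_stmt0 (K : Type) [Field K] (n : ℕ) (S : ZeroDimScheme K n)
    (j : Fin S.s) (sj : (S.pt j).carrier) (hsoc : S.IsSocle j sj) (hsj : sj ≠ 0)
    (i : ℕ) (hi : S.alphaY j sj ≤ i) (f : S.Gamma)
    (hf : f ∈ S.IY j sj i) (hf0 : f ≠ 0) :
    ∀ (m : ℕ) (x : S.Gamma),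
      x ∈ S.IY j sj m ↔
        x ∈ S.V m ∧ ∃ k : ℕ, ∀ a : ℕ, k ≤ a → ∀ y ∈ S.V a,
          y * x ∈ Submodule.map (LinearMap.mulRight K f)
            (S.Vz ((a : ℤ) + (m : ℤ) - (i : ℤ))) := by
  intro m x
  rw [S.exists_forall_mul_mem_map_mulRight_iff_mem_span f x i m,
    S.span_singleton_eq_of_mem_sepIdeal hsoc hsj hf.2 hf0]
  exact Submodule.mem_inf
end

section
/- Let 𝕐 ⊆ 𝕏 be a maximal p_j-subscheme. Then α_{𝕐/𝕏} ≤ μ_{𝕐/𝕏} ≤ r_𝕏, and the Hilbert function of 𝕐 satisfies: HF_𝕐(i) = HF_𝕏(i) for i < α_{𝕐/𝕏}; HF_𝕐(i) ≤ HF_𝕏(i) − 1 for α_{𝕐/𝕏} ≤ i < μ_{𝕐/𝕏}; and HF_𝕐(i) = HF_𝕏(i) − κ_j for i ≥ μ_{𝕐/𝕏}. -/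
/-!
As a `K`-vector space the ideal of `𝕐` in `Γ` is a copy of `κ(p_j)`: the socle element `sj`
has annihilator `𝔪_{𝕏,p_j}`, so `⟨sj⟩ ≅ 𝒪_{𝕏,p_j} / 𝔪_{𝕏,p_j}`. The subspaces `V i` increase
with `i` and exhaust `Γ` from `r_𝕏` on. Hence `V i` meets this ideal nontrivially exactly when
`α_{𝕐/𝕏} ≤ i`, contains it exactly when `μ_{𝕐/𝕏} ≤ i`, and the dimension of the intersection
is the difference of the two Hilbert functions.
-/

section LocalRing

variable {A M : Type*} [CommRing A] [IsLocalRing A] [AddCommGroup M] [Module A M]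

theorem torsionOf_eq_maximalIdeal {x : M} (hx : x ≠ 0)
    (hann : ∀ a ∈ IsLocalRing.maximalIdeal A, a • x = 0) :
    Ideal.torsionOf A M x = IsLocalRing.maximalIdeal A := by
  refine le_antisymm (IsLocalRing.le_maximalIdeal ?_) hann
  rwa [Ne, Ideal.torsionOf_eq_top_iff]

theorem finrank_span_singleton_eq_finrank_residue (K : Type*) [CommRing K] [Algebra K A]
    [Module K M] [IsScalarTower K A M] {x : M} (hx : x ≠ 0)
    (hann : ∀ a ∈ IsLocalRing.maximalIdeal A, a • x = 0) :
    Module.finrank K ((Submodule.span A {x}).restrictScalars K) =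
      Module.finrank K (A ⧸ (IsLocalRing.maximalIdeal A).restrictScalars K) := by
  rw [← torsionOf_eq_maximalIdeal hx hann]
  exact (((Submodule.Quotient.restrictScalarsEquiv K _).trans
    ((Ideal.quotTorsionOfEquivSpanSingleton A M x).restrictScalars K)).finrank_eq).symm

end LocalRing

theorem mem_span_pi_single_iff {ι : Type*} [DecidableEq ι] {A : ι → Type*}
    [∀ i, CommSemiring (A i)] {j : ι} {s : A j} {x : ∀ i, A i} :
    x ∈ Ideal.span {Pi.single j s} ↔ ∃ a, Pi.single j (a * s) = x := by
  rw [Ideal.mem_span_singleton']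
  constructor
  · rintro ⟨y, rfl⟩
    exact ⟨y j, Pi.single_mul_right ..⟩
  · rintro ⟨a, rfl⟩
    exact ⟨Pi.single j a, (Pi.single_mul ..).symm⟩

theorem restrictScalars_span_pi_single (K : Type*) [CommSemiring K] {ι : Type*} [DecidableEq ι]
    {A : ι → Type*} [∀ i, CommSemiring (A i)] [∀ i, Algebra K (A i)] (j : ι) (s : A j) :
    (Ideal.span {(Pi.single j s : ∀ i, A i)}).restrictScalars K =
      ((Ideal.span {s}).restrictScalars K).map (LinearMap.single K A j) := by
  ext x
  rw [Submodule.restrictScalars_mem, mem_span_pi_single_iff]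
  simp [Ideal.mem_span_singleton']

namespace ZeroDimScheme

variable {K : Type} [Field K] {n : ℕ} (S : ZeroDimScheme K n)

-- Multiplication by `X₀` raises the degree without changing the germs.
theorem V_mono : Monotone S.V := by
  refine monotone_nat_of_le_succ fun i => ?_
  rintro _ ⟨F, hF, rfl⟩
  refine ⟨F * MvPolynomial.X 0, hF.mul (MvPolynomial.isHomogeneous_X K 0), ?_⟩
  simp [S.germ_X0]

theorem exists_forall_HF_eq_degX : ∃ r, ∀ i, r ≤ i → S.HF i = S.degX := by
  obtain ⟨N, hN⟩ := S.eventually_surj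
  refine ⟨N, fun i hi => ?_⟩
  rw [HF, V, hN i hi, finrank_top, degX]

theorem V_rX : S.V S.rX = ⊤ :=
  Submodule.eq_top_of_finrank_eq (Nat.sInf_mem S.exists_forall_HF_eq_degX _ le_rfl)

theorem mem_V_rX (x : S.Gamma) : x ∈ S.V S.rX :=
  S.V_rX ▸ Submodule.mem_top

variable {S} {j : Fin S.s} {sj : (S.pt j).carrier} {i : ℕ}

theorem mem_sepIdeal_iff {x : S.Gamma} :
    x ∈ S.sepIdeal j sj ↔ ∃ a, Pi.single j (a * sj) = x :=
  mem_span_pi_single_iff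

theorem sepIdeal_ne_bot (hsj : sj ≠ 0) : S.sepIdeal j sj ≠ ⊥ := by
  simpa [sepIdeal] using hsj

theorem finrank_sepIdeal (hsoc : S.IsSocle j sj) (hsj : sj ≠ 0) :
    Module.finrank K (S.sepIdeal j sj) = S.kappa j := by
  have hann : ∀ a ∈ IsLocalRing.maximalIdeal (S.pt j).carrier, a • sj = 0 := fun a ha => by
    rw [smul_eq_mul, mul_comm, hsoc a ha]
  rw [sepIdeal, restrictScalars_span_pi_single, kappa,
    ← finrank_span_singleton_eq_finrank_residue K hsj hann]
  exact (Submodule.equivMapOfInjective _ (LinearMap.ker_eq_bot.1 (LinearMap.ker_single ..))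
    _).finrank_eq.symm

theorem single_mem_V_iff_mu_le {a : (S.pt j).carrier} :
    (Pi.single j a : S.Gamma) ∈ S.V i ↔ S.mu j a ≤ i := by
  refine ⟨fun h => Nat.sInf_le h, fun hi => S.V_mono hi ?_⟩
  exact Nat.sInf_mem (s := {i | (Pi.single j a : S.Gamma) ∈ S.V i}) ⟨S.rX, S.mem_V_rX _⟩

theorem bddAbove_mu_mul :
    BddAbove {m | ∃ a, a * sj ≠ 0 ∧ m = S.mu j (a * sj)} := by
  refine ⟨S.rX, ?_⟩
  rintro _ ⟨a, -, rfl⟩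
  exact single_mem_V_iff_mu_le.1 (S.mem_V_rX _)

theorem sepIdeal_le_V_iff_muY_le : S.sepIdeal j sj ≤ S.V i ↔ S.muY j sj ≤ i := by
  constructor
  · refine fun h => csSup_le' ?_
    rintro _ ⟨a, -, rfl⟩
    exact single_mem_V_iff_mu_le.1 (h (mem_sepIdeal_iff.2 ⟨a, rfl⟩))
  · intro hi x hx
    obtain ⟨a, rfl⟩ := mem_sepIdeal_iff.1 hx
    by_cases ha : a * sj = 0
    · simp [ha]
    · exact single_mem_V_iff_mu_le.2 ((le_csSup bddAbove_mu_mul ⟨a, ha, rfl⟩).trans hi)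

theorem muY_le_rX : S.muY j sj ≤ S.rX :=
  sepIdeal_le_V_iff_muY_le.1 fun x _ => S.mem_V_rX x

theorem IY_eq_sepIdeal_of_muY_le (hi : S.muY j sj ≤ i) : S.IY j sj i = S.sepIdeal j sj :=
  inf_eq_right.2 (sepIdeal_le_V_iff_muY_le.2 hi)

theorem IY_mono : Monotone (S.IY j sj) :=
  fun _ _ h => inf_le_inf_right _ (S.V_mono h)

theorem IY_ne_bot_iff_alphaY_le (hsj : sj ≠ 0) : S.IY j sj i ≠ ⊥ ↔ S.alphaY j sj ≤ i := by
  refine ⟨fun h => Nat.sInf_le h, fun hi => ?_⟩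
  have nonempty : {i | S.IY j sj i ≠ ⊥}.Nonempty :=
    ⟨S.muY j sj, (IY_eq_sepIdeal_of_muY_le le_rfl).trans_ne (sepIdeal_ne_bot hsj)⟩
  exact ne_bot_of_le_ne_bot (Nat.sInf_mem nonempty) (IY_mono hi)

theorem alphaY_le_muY (hsj : sj ≠ 0) : S.alphaY j sj ≤ S.muY j sj := by
  rw [← IY_ne_bot_iff_alphaY_le hsj, IY_eq_sepIdeal_of_muY_le le_rfl]
  exact sepIdeal_ne_bot hsj

theorem HFY_eq_HF_of_lt_alphaY (hi : i < S.alphaY j sj) : S.HFY j sj i = S.HF i := by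
  have hbot : S.IY j sj i = ⊥ := not_not.1 (Nat.notMem_of_lt_sInf hi)
  rw [HFY, hbot, finrank_bot, Nat.sub_zero]

theorem HFY_lt_HF_of_alphaY_le (hsj : sj ≠ 0) (hi : S.alphaY j sj ≤ i) :
    S.HFY j sj i < S.HF i := by
  have hpos : 0 < Module.finrank K (S.IY j sj i) :=
    Submodule.one_le_finrank_iff.2 ((IY_ne_bot_iff_alphaY_le hsj).2 hi)
  have hle : Module.finrank K (S.IY j sj i) ≤ S.HF i := Submodule.finrank_mono inf_le_left
  exact Nat.sub_lt (hpos.trans_le hle) hpos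

theorem HFY_eq_HF_sub_kappa_of_muY_le (hsoc : S.IsSocle j sj) (hsj : sj ≠ 0)
    (hi : S.muY j sj ≤ i) : S.HFY j sj i = S.HF i - S.kappa j := by
  rw [HFY, IY_eq_sepIdeal_of_muY_le hi, finrank_sepIdeal hsoc hsj]

end ZeroDimScheme

/-- Proposition 1.5(b).  Let `𝕐 ⊆ 𝕏` be a maximal `p_j`-subscheme
(given by a nonzero socle element `sj`).  Then `α_{𝕐/𝕏} ≤ μ_{𝕐/𝕏} ≤ r_𝕏`, and the
Hilbert function of `𝕐` satisfies `HF_𝕐(i) = HF_𝕏(i)` for `i < α_{𝕐/𝕏}`,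
`HF_𝕐(i) ≤ HF_𝕏(i) - 1` for `α_{𝕐/𝕏} ≤ i < μ_{𝕐/𝕏}`, and
`HF_𝕐(i) = HF_𝕏(i) - κ_j` for `i ≥ μ_{𝕐/𝕏}`. -/
theorem dedekind_CB_stmt1 (K : Type) [Field K] (n : ℕ) (S : ZeroDimScheme K n)
    (j : Fin S.s) (sj : (S.pt j).carrier) (hsoc : S.IsSocle j sj) (hsj : sj ≠ 0) :
    (S.alphaY j sj ≤ S.muY j sj ∧ S.muY j sj ≤ S.rX) ∧
    (∀ i : ℕ, i < S.alphaY j sj → S.HFY j sj i = S.HF i) ∧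
    (∀ i : ℕ, S.alphaY j sj ≤ i → i < S.muY j sj → S.HFY j sj i + 1 ≤ S.HF i) ∧
    (∀ i : ℕ, S.muY j sj ≤ i → S.HFY j sj i = S.HF i - S.kappa j) :=
  ⟨⟨ZeroDimScheme.alphaY_le_muY hsj, ZeroDimScheme.muY_le_rX⟩,
    fun _ => ZeroDimScheme.HFY_eq_HF_of_lt_alphaY,
    fun _ hα _ => ZeroDimScheme.HFY_lt_HF_of_alphaY_le hsj hα,
    fun _ => ZeroDimScheme.HFY_eq_HF_sub_kappa_of_muY_le hsoc hsj⟩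
end

section
/- Let 𝕏 = {p_1,…,p_s} ⊆ ℙ^n_K be a set of s ≥ 2 distinct K-rational points, none lying on Z(X_0). Then the Hilbert polynomial of the Dedekind different δ_𝕏 is the constant polynomial s, and the regularity index of δ_𝕏 equals 2r_𝕏, i.e. HF_{δ_𝕏}(i) = s for all i ≥ 2r_𝕏 while HF_{δ_𝕏}(2r_𝕏 − 1) < s. -/
/-!
The trace pairing `(x, y) ↦ Σ_j τ_j (x_j y_j)` on `Γ` is a nondegenerate symmetric form, and the
degree-`k` component of the complementary module is the orthogonal complement of `R_{-k-1}`. Hence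
`𝔠_k = 0` for `k < -r_𝕏`, so for `i ≥ 2 r_𝕏` every element of `Γ` multiplies each nonzero
`𝔠_k` into `R_{i+k} = Γ`, and `δ_i = Γ`. Conversely, if `δ_i = Γ` with `i < 2 r_𝕏`, then
`W = R_{r_𝕏-1}` satisfies `Γ · W^⊥ ⊆ W`. For `g ∈ W^⊥` and all `f ∈ Γ` the elements `g` and `fg`
are then orthogonal, so `g² = 0` by nondegeneracy and `g = 0` because `Γ` is reduced. This gives
`W^⊥ = 0`, that is `R_{r_𝕏-1} = Γ`, contradicting the minimality of `r_𝕏`.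
-/

section MulForm

variable {R A : Type*} [CommRing R] [CommRing A] [Algebra R A]

/-- The symmetric bilinear form `(x, y) ↦ T (x * y)` on a commutative algebra attached to a linear
functional `T`. For `T = S.Ttot τ` this is the trace pairing on `Γ`. -/
noncomputable def mulForm (T : A →ₗ[R] R) : LinearMap.BilinForm R A :=
  (LinearMap.mul R A).compr₂ T

theorem mulForm_apply (T : A →ₗ[R] R) (x y : A) : mulForm T x y = T (x * y) := rfl

theorem isSymm_mulForm (T : A →ₗ[R] R) : (mulForm T).IsSymm :=
  ⟨fun x y => congrArg T (mul_comm x y)⟩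

theorem nondegenerate_mulForm_iff (T : A →ₗ[R] R) :
    (mulForm T).Nondegenerate ↔ ∀ a, (∀ x, T (a * x) = 0) → a = 0 :=
  (isSymm_mulForm T).isRefl.nondegenerate_iff_separatingLeft

theorem nondegenerate_mulForm_sum_comp_proj {ι : Type*} [Fintype ι] {B : ι → Type*}
    [∀ i, CommRing (B i)] [∀ i, Algebra R (B i)] {T : ∀ i, B i →ₗ[R] R}
    (hT : ∀ i, (mulForm (T i)).Nondegenerate) :
    (mulForm (∑ i, T i ∘ₗ LinearMap.proj i)).Nondegenerate := by
  classical
  refine (nondegenerate_mulForm_iff _).2 fun a ha => funext fun i => ?_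
  refine (nondegenerate_mulForm_iff _).1 (hT i) (a i) fun x => ?_
  have hsum : ∑ k, T k (a k * (Pi.single i x : ∀ k, B k) k) = 0 := by
    simpa using ha (Pi.single i x)
  rwa [Fintype.sum_eq_single i fun k hk => by rw [Pi.single_eq_of_ne hk, mul_zero, map_zero],
    Pi.single_eq_same] at hsum

end MulForm

theorem eq_top_of_mul_orthogonal_mem {K A : Type*} [Field K] [CommRing A] [Algebra K A]
    [FiniteDimensional K A] [IsReduced A] {T : A →ₗ[K] K} (hT : (mulForm T).Nondegenerate)
    {W : Submodule K A} (hW : ∀ f, ∀ g ∈ (mulForm T).orthogonal W, f * g ∈ W) : W = ⊤ := by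
  have hbot : (mulForm T).orthogonal W = ⊥ := by
    refine (Submodule.eq_bot_iff _).2 fun g hg => ?_
    have hsq : g * g = 0 := by
      refine (nondegenerate_mulForm_iff T).1 hT _ fun f => ?_
      calc T (g * g * f) = T (f * g * g) := by ring_nf
        _ = 0 := hg (f * g) (hW f g hg)
    exact IsReduced.eq_zero g ⟨2, (sq g).trans hsq⟩
  rw [← LinearMap.BilinForm.orthogonal_orthogonal hT (isSymm_mulForm T).isRefl W, hbot,
    LinearMap.BilinForm.orthogonal_bot]

theorem isReduced_of_finrank_eq_one {R A : Type*} [CommRing R] [Nontrivial R] [IsReduced R]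
    [CommRing A] [Algebra R A] [Module.Free R A] (h : Module.finrank R A = 1) : IsReduced A :=
  let e := RingEquiv.ofBijective _ (Algebra.finrank_eq_one_iff_bijective_algebraMap.1 h)
  isReduced_of_injective e.symm e.symm.injective

namespace ZeroDimScheme

variable {K : Type} [Field K] {n : ℕ} (S : ZeroDimScheme K n)

theorem nontrivial_Gamma : Nontrivial S.Gamma :=
  Pi.nontrivial_at ⟨0, S.spos⟩

theorem degX_eq_s (hrat : ∀ j, Module.finrank K (S.pt j).carrier = 1) : S.degX = S.s := by
  simp [degX, Module.finrank_pi_fintype, hrat]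

theorem HF_eq_degX_iff (i : ℕ) : S.HF i = S.degX ↔ S.V i = ⊤ :=
  ⟨Submodule.eq_top_of_finrank_eq, fun h => by rw [HF, h, finrank_top, degX]⟩

theorem V_eq_top_iff (i : ℕ) : S.V i = ⊤ ↔ S.rX ≤ i := by
  refine ⟨fun h => Nat.sInf_le fun j hij => (S.HF_eq_degX_iff j).2 ?_, fun h => ?_⟩
  · exact top_le_iff.1 (h ▸ S.V_mono hij)
  · have hne : {r : ℕ | ∀ i, r ≤ i → S.HF i = S.degX}.Nonempty :=
      S.eventually_surj.imp fun N hN j hj => (S.HF_eq_degX_iff j).2 (hN j hj)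
    exact (S.HF_eq_degX_iff i).1 (Nat.sInf_mem hne i h)

theorem Vz_natCast (i : ℕ) : S.Vz i = S.V i := by simp [Vz]

theorem Vz_of_neg {i : ℤ} (hi : i < 0) : S.Vz i = ⊥ := if_neg hi.not_ge

theorem Vz_mono : Monotone S.Vz := by
  intro i j hij
  rcases lt_or_ge i 0 with hi | hi
  · exact (S.Vz_of_neg hi).trans_le bot_le
  · lift i to ℕ using hi
    lift j to ℕ using by lia
    simpa only [Vz_natCast] using S.V_mono (Int.ofNat_le.1 hij)

theorem Vz_eq_top_iff (i : ℤ) : S.Vz i = ⊤ ↔ S.rX ≤ i := by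
  rcases lt_or_ge i 0 with hi | hi
  · have := S.nontrivial_Gamma
    rw [S.Vz_of_neg hi]
    exact iff_of_false bot_ne_top (by lia)
  · lift i to ℕ using hi
    rw [Vz_natCast, V_eq_top_iff, Nat.cast_le]

variable {S} {τ : ∀ j, (S.pt j).carrier →ₗ[K] K}

theorem IsTraceFamily.nondegenerate_mulForm_Ttot (hτ : S.IsTraceFamily τ) :
    (mulForm (S.Ttot τ)).Nondegenerate := by
  refine nondegenerate_mulForm_sum_comp_proj fun j => ?_
  refine (nondegenerate_mulForm_iff _).2 fun a ha => (hτ j).1 (LinearMap.ext fun x => ?_)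
  simpa [mul_comm] using ha x

theorem mem_Cmod_iff {k : ℤ} {g : S.Gamma} :
    g ∈ S.Cmod τ k ↔ ∀ i : ℕ, k + i < 0 → ∀ x ∈ S.V i, S.Ttot τ (g * x) = 0 := by
  simp [Cmod]

theorem mem_delta_iff {i : ℤ} {f : S.Gamma} :
    f ∈ S.delta τ i ↔ ∀ k, ∀ g ∈ S.Cmod τ k, f * g ∈ S.Vz (i + k) := by
  simp [delta]

variable (τ) in
theorem Cmod_eq_orthogonal (k : ℤ) :
    S.Cmod τ k = (mulForm (S.Ttot τ)).orthogonal (S.Vz (-k - 1)) := by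
  ext g
  simp only [mem_Cmod_iff, LinearMap.BilinForm.mem_orthogonal_iff, mulForm_apply, mul_comm _ g]
  constructor
  · intro h x hx
    rcases lt_or_ge (-k - 1) 0 with hk | hk
    · rw [S.Vz_of_neg hk, Submodule.mem_bot] at hx
      rw [hx, mul_zero, map_zero]
    · obtain ⟨d, hd⟩ := Int.eq_ofNat_of_zero_le hk
      rw [hd, Vz_natCast] at hx
      exact h d (by lia) x hx
  · intro h i hi x hx
    rw [← Vz_natCast] at hx
    exact h x (S.Vz_mono (by lia) hx)

theorem Cmod_eq_bot_of_lt (hτ : S.IsTraceFamily τ) {k : ℤ} (hk : k < -S.rX) :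
    S.Cmod τ k = ⊥ := by
  rw [Cmod_eq_orthogonal, (S.Vz_eq_top_iff _).2 (by lia),
    LinearMap.BilinForm.orthogonal_top_eq_bot hτ.nondegenerate_mulForm_Ttot]

theorem delta_eq_top_of_le (hτ : S.IsTraceFamily τ) {i : ℤ} (hi : 2 * S.rX ≤ i) :
    S.delta τ i = ⊤ := by
  refine Submodule.eq_top_iff'.2 fun f => mem_delta_iff.2 fun k g hg => ?_
  rcases lt_or_ge k (-S.rX) with hk | hk
  · rw [Cmod_eq_bot_of_lt hτ hk, Submodule.mem_bot] at hg
    rw [hg, mul_zero]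
    exact zero_mem _
  · rw [(S.Vz_eq_top_iff _).2 (by lia)]
    exact Submodule.mem_top

theorem delta_ne_top_of_lt [IsReduced S.Gamma] (hτ : S.IsTraceFamily τ) {i : ℤ}
    (hi : i < 2 * S.rX) : S.delta τ i ≠ ⊤ := by
  intro htop
  have hVz : S.Vz (S.rX - 1) = ⊤ := by
    refine eq_top_of_mul_orthogonal_mem hτ.nondegenerate_mulForm_Ttot fun f g hg => ?_
    have hgC : g ∈ S.Cmod τ (-S.rX) := by rwa [Cmod_eq_orthogonal, neg_neg]
    have hf : f ∈ S.delta τ i := htop ▸ Submodule.mem_top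
    exact S.Vz_mono (by lia) (mem_delta_iff.1 hf _ g hgC)
  have := (S.Vz_eq_top_iff _).1 hVz
  lia

end ZeroDimScheme

theorem dedekind_CB_stmt3_general {K : Type} [Field K] {n : ℕ} (S : ZeroDimScheme K n)
    [∀ j, IsReduced (S.pt j).carrier]
    {τ : ∀ j, (S.pt j).carrier →ₗ[K] K} (hτ : S.IsTraceFamily τ) :
    (∀ i : ℤ, 2 * (S.rX : ℤ) ≤ i → S.HFdelta τ i = S.degX) ∧
    ∀ i : ℤ, i < 2 * (S.rX : ℤ) → S.HFdelta τ i < S.degX := by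
  refine ⟨fun i hi => ?_, fun i hi => ?_⟩
  · rw [ZeroDimScheme.HFdelta, ZeroDimScheme.delta_eq_top_of_le hτ hi, finrank_top,
      ZeroDimScheme.degX]
  · exact Submodule.finrank_lt (ZeroDimScheme.delta_ne_top_of_lt hτ hi)

/-- Corollary 3.6 of Section 3 / Corollary after Prop. 2.5.  Let
`𝕏 = {p_1, …, p_s} ⊆ ℙⁿ_K` be a set of `s ≥ 2` distinct `K`-rational points
(i.e. every `𝒪_{𝕏,p_j}` is one-dimensional over `K`), none on `Z(X₀)`, and let `δ_𝕏`
be the Dedekind different with respect to the canonical trace map (the trace family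
with `τ_j(1) = 1`).  Then the Hilbert polynomial of `δ_𝕏` is the constant polynomial
`s` and the regularity index of `δ_𝕏` equals `2 r_𝕏`, i.e. `HF_{δ_𝕏}(i) = s` for all
`i ≥ 2 r_𝕏` while `HF_{δ_𝕏}(2 r_𝕏 - 1) < s`. -/
theorem dedekind_CB_stmt3 (K : Type) [Field K] (n : ℕ) (S : ZeroDimScheme K n)
    (hs : 2 ≤ S.s)
    (hrat : ∀ j, Module.finrank K (S.pt j).carrier = 1)
    (τ : ∀ j, (S.pt j).carrier →ₗ[K] K) (hτ : S.IsTraceFamily τ)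
    (hτ1 : ∀ j, τ j 1 = 1) :
    (∀ i : ℤ, 2 * (S.rX : ℤ) ≤ i → S.HFdelta τ i = S.s) ∧
    S.HFdelta τ (2 * (S.rX : ℤ) - 1) < S.s := by
  have hred (j) : IsReduced (S.pt j).carrier := isReduced_of_finrank_eq_one (hrat j)
  obtain ⟨heq, hlt⟩ := dedekind_CB_stmt3_general S hτ
  rw [S.degX_eq_s hrat] at heq hlt
  exact ⟨heq, hlt _ (by lia)⟩
end
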